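/- Let q = 2^m with m odd, and γ = 1. Then the map u ↦ u⁵ + u³ + u is a bijection of F_q. More generally, for γ ∈ F_q*, the map u ↦ u⁵ + u³ + γ^{-1}u is a bijection of F_q if and only if γ = 1 and m is odd. -/

import Mathlib

namespace Stmt18

variable {F : Type*} [Field F]

/-- Absolute trace of `F_{2^m}`, with values in `F`. -/
def T (m : ℕ) (x : F) : F := ∑ i ∈ Finset.range m, x ^ 2 ^ i

lemma T_add [CharP F 2] (m : ℕ) (x y : F) : T m (x + y) = T m x + T m y := by
  simp only [T, ← Finset.sum_add_distrib]
  exact Finset.sum_congr rfl fun i _ => add_pow_char_pow x y 2 i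

lemma T_sq_arg [CharP F 2] {m : ℕ} (x : F) (hx : x ^ 2 ^ m = x) : T m (x ^ 2) = T m x := by
  have h1 : T m (x ^ 2) = ∑ i ∈ Finset.range m, x ^ 2 ^ (i + 1) := by
    refine Finset.sum_congr rfl fun i _ => ?_
    rw [← pow_mul, pow_succ, mul_comm]
  have h2 := Finset.sum_range_succ (fun i => x ^ 2 ^ i) m
  have h3 := Finset.sum_range_succ' (fun i => x ^ 2 ^ i) m
  rw [h2, hx] at h3
  simp only [pow_zero, pow_one] at h3
  rw [h1]
  exact (add_right_cancel h3).symm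

lemma T_sq [CharP F 2] {m : ℕ} (x : F) : T m x ^ 2 = T m (x ^ 2) := by
  unfold T
  rw [sum_pow_char 2]
  exact Finset.sum_congr rfl fun i _ => by rw [← pow_mul, ← pow_mul, mul_comm]

lemma T_cases [CharP F 2] {m : ℕ} (x : F) (hx : x ^ 2 ^ m = x) : T m x = 0 ∨ T m x = 1 := by
  have h : T m x ^ 2 = T m x := by rw [T_sq, T_sq_arg x hx]
  have : T m x * (T m x - 1) = 0 := by linear_combination h
  rcases mul_eq_zero.1 this with h | h
  · exact Or.inl h
  · exact Or.inr (sub_eq_zero.1 h)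

lemma T_one [CharP F 2] {m : ℕ} (hm : Odd m) : T m (1 : F) = 1 := by
  obtain ⟨k, rfl⟩ := hm
  have h2 : (2 : F) = 0 := CharTwo.two_eq_zero
  simp [T, h2]

lemma half_trace [CharP F 2] (k : ℕ) (x : F) :
    (∑ i ∈ Finset.range (k + 1), x ^ 2 ^ (2 * i)) ^ 2 + ∑ i ∈ Finset.range (k + 1), x ^ 2 ^ (2 * i)
      = T (2 * k + 1) x + x ^ 2 ^ (2 * k + 1) := by
  rw [sum_pow_char 2]
  induction k with
  | zero => simp [T]; ring
  | succ k ih =>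
    rw [Finset.sum_range_succ, Finset.sum_range_succ (fun i => x ^ 2 ^ (2 * i)) (k + 1)]
    have e : T (2 * (k + 1) + 1) x
        = T (2 * k + 1) x + x ^ 2 ^ (2 * k + 1) + x ^ 2 ^ (2 * (k + 1)) := by
      unfold T
      rw [show 2 * (k + 1) + 1 = 2 * k + 1 + 1 + 1 by ring, Finset.sum_range_succ,
        Finset.sum_range_succ]
      rfl
    have e2 : (x ^ 2 ^ (2 * (k + 1))) ^ 2 = x ^ 2 ^ (2 * (k + 1) + 1) := by
      rw [← pow_mul, ← pow_succ]
    rw [e, e2, ← ih]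
    ring

lemma exists_of_T [CharP F 2] {m : ℕ} (hm : Odd m) (x : F) (hx : x ^ 2 ^ m = x)
    (h : T m x = 0) : ∃ t : F, t ^ 2 + t = x := by
  obtain ⟨k, rfl⟩ := hm
  exact ⟨_, by rw [half_trace, h, hx, zero_add]⟩

lemma exists_sqrt {m : ℕ} (hm : 0 < m) (x : F) (hx : x ^ 2 ^ m = x) : ∃ t : F, t ^ 2 = x :=
  ⟨x ^ 2 ^ (m - 1), by rw [← pow_mul, ← pow_succ, Nat.sub_add_cancel hm, hx]⟩

/-- collision from a parameter -/
lemma collision [CharP F 2] (β s t r : F) (hs : s ≠ 0) (hr : t ^ 2 + t = r)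
    (h : s ^ 4 * (1 + r + r ^ 2) + s ^ 2 * (1 + r) + β = 0) :
    ¬ Function.Injective (fun u : F => u ^ 5 + u ^ 3 + β * u) := by
  intro hi
  have h2 : (2 : F) = 0 := CharTwo.two_eq_zero
  have : s * t = s * (t + 1) := by
    apply hi
    subst hr
    simp only
    grind
  apply hs
  linear_combination -this

lemma exp_arith {m i j : ℕ} (hm : 3 ≤ m) (hi : i < m) (hj : j < m) :
    (2 ^ m - 1 ∣ 1 + 2 ^ i + (2 ^ m - 1 - 2 ^ j)) ↔ i = 0 ∧ j = 1 := by
  obtain ⟨n, rfl⟩ : ∃ n, m = n + 1 := ⟨m - 1, by omega⟩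
  have h1 : 2 ^ i ≤ 2 ^ n := Nat.pow_le_pow_right (by norm_num) (by omega)
  have h2 : 2 ^ j ≤ 2 ^ n := Nat.pow_le_pow_right (by norm_num) (by omega)
  have h3 : 2 ^ 2 ≤ 2 ^ n := Nat.pow_le_pow_right (by norm_num) (by omega)
  have h4 : 2 ^ (n + 1) = 2 * 2 ^ n := by ring
  have hi0 : 1 ≤ 2 ^ i := Nat.one_le_two_pow
  have hj0 : 1 ≤ 2 ^ j := Nat.one_le_two_pow
  constructor
  · rintro ⟨k, hk⟩
    have hk1 : k = 1 := by
      have : k ≠ 0 := by rintro rfl; omega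
      have : k < 2 := by
        by_contra hc
        have := Nat.mul_le_mul_left (2 ^ (n + 1) - 1) (not_lt.1 hc)
        omega
      omega
    subst hk1
    have h5 : 2 ^ j = 1 + 2 ^ i := by omega
    have hi' : i = 0 := by
      by_contra hc
      obtain ⟨a, rfl⟩ := Nat.exists_eq_succ_of_ne_zero hc
      rcases j with _ | b
      · simp at h5
      · simp only [Nat.succ_eq_add_one, pow_succ] at h5; omega
    subst hi'
    refine ⟨rfl, ?_⟩
    have : 2 ^ j = 2 ^ 1 := by omega
    exact Nat.pow_right_injective (le_refl 2) this
  · rintro ⟨rfl, rfl⟩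
    exact ⟨1, by omega⟩

lemma kloosterman [Fintype F] [CharP F 2] {m : ℕ} (hm : 3 ≤ m) (hF : Fintype.card F = 2 ^ m)
    (c e : F) (hc : c ≠ 0) (H : ∀ x : F, x ≠ 0 → T m x * (T m (c * x⁻¹) + e) = 0) : False := by
  classical
  have hpow : ∀ n : ℕ, ∑ x : Fˣ, (x : F) ^ n = if 2 ^ m - 1 ∣ n then -1 else 0 := by
    intro n
    have := FiniteField.sum_pow_units F n
    rw [hF] at this
    simpa using this
  have key : ∀ x : Fˣ, ∑ i ∈ Finset.range m, ∑ j ∈ Finset.range m,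
      c ^ 2 ^ j * (x : F) ^ (1 + 2 ^ i + (2 ^ m - 1 - 2 ^ j))
      + ∑ i ∈ Finset.range m, e * (x : F) ^ (1 + 2 ^ i) = 0 := by
    intro x
    have h := H x x.ne_zero
    have h' : (x : F) * (T m (x : F) * (T m (c * (x : F)⁻¹) + e)) = 0 := by rw [h, mul_zero]
    rw [← h', mul_add, mul_add]
    congr 1
    · unfold T
      rw [Finset.sum_mul_sum, Finset.mul_sum]
      refine Finset.sum_congr rfl fun i _ => ?_
      rw [Finset.mul_sum]
      refine Finset.sum_congr rfl fun j hj => ?_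
      have hjm : 2 ^ j ≤ 2 ^ m - 1 := by
        have := Nat.pow_lt_pow_right (a := 2) (by norm_num) (Finset.mem_range.1 hj)
        omega
      have hx : (x : F) ^ (2 ^ m - 1 - 2 ^ j) = ((x : F)⁻¹) ^ 2 ^ j := by
        rw [pow_sub₀ _ x.ne_zero hjm, ← hF, FiniteField.pow_card_sub_one_eq_one _ x.ne_zero,
          one_mul, inv_pow]
      rw [pow_add, pow_add, hx, mul_pow]
      ring
    · unfold T
      rw [Finset.sum_mul, Finset.mul_sum]
      exact Finset.sum_congr rfl fun i _ => by ring
  have hsum : ∑ x : Fˣ, (∑ i ∈ Finset.range m, ∑ j ∈ Finset.range m,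
      c ^ 2 ^ j * (x : F) ^ (1 + 2 ^ i + (2 ^ m - 1 - 2 ^ j))
      + ∑ i ∈ Finset.range m, e * (x : F) ^ (1 + 2 ^ i)) = 0 :=
    Finset.sum_eq_zero fun x _ => key x
  rw [Finset.sum_add_distrib, Finset.sum_comm, Finset.sum_comm (s := Finset.univ)] at hsum
  have hB : ∑ i ∈ Finset.range m, ∑ x : Fˣ, e * (x : F) ^ (1 + 2 ^ i) = 0 := by
    refine Finset.sum_eq_zero fun i hi => ?_
    rw [← Finset.mul_sum, hpow, if_neg, mul_zero]
    intro hd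
    have := Nat.le_of_dvd (by positivity) hd
    obtain ⟨n, rfl⟩ : ∃ n, m = n + 1 := ⟨m - 1, by omega⟩
    have h1 : 2 ^ i ≤ 2 ^ n :=
      Nat.pow_le_pow_right (by norm_num) (by have := Finset.mem_range.1 hi; omega)
    have h3 : 2 ^ 2 ≤ 2 ^ n := Nat.pow_le_pow_right (by norm_num) (by omega)
    have h4 : 2 ^ (n + 1) = 2 * 2 ^ n := by ring
    omega
  rw [hB, add_zero] at hsum
  have hA : ∀ i ∈ Finset.range m, ∑ x : Fˣ, ∑ j ∈ Finset.range m,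
      c ^ 2 ^ j * (x : F) ^ (1 + 2 ^ i + (2 ^ m - 1 - 2 ^ j))
      = if i = 0 then - c ^ 2 else 0 := by
    intro i hi
    rw [Finset.sum_comm]
    have : ∀ j ∈ Finset.range m, ∑ x : Fˣ,
        c ^ 2 ^ j * (x : F) ^ (1 + 2 ^ i + (2 ^ m - 1 - 2 ^ j))
        = if j = 1 then (if i = 0 then - c ^ 2 else 0) else 0 := by
      intro j hj
      rw [← Finset.mul_sum, hpow]
      simp only [exp_arith hm (Finset.mem_range.1 hi) (Finset.mem_range.1 hj)]
      by_cases h1 : j = 1 <;> by_cases h0 : i = 0 <;> simp [h0, h1]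
    rw [Finset.sum_congr rfl this, Finset.sum_ite_eq' , if_pos (Finset.mem_range.2 (by omega))]
  rw [Finset.sum_congr rfl hA, Finset.sum_ite_eq', if_pos (Finset.mem_range.2 (by omega))] at hsum
  exact hc (by simpa using hsum)

lemma dickson_inj [CharP F 2] {m : ℕ} (hm : Odd m) (hq : ∀ x : F, x ^ 2 ^ m = x) :
    Function.Injective (fun u : F => u ^ 5 + u ^ 3 + u) := by
  intro u v h
  have h2 : (2 : F) = 0 := CharTwo.two_eq_zero
  by_contra hne
  simp only at h
  obtain ⟨s, hs⟩ : ∃ s, s = u + v := ⟨_, rfl⟩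
  have hs0 : s ≠ 0 := by
    intro h0
    apply hne
    linear_combination hs.symm.trans h0 - v * h2
  obtain ⟨t, ht⟩ : ∃ t, t = u / s := ⟨_, rfl⟩
  have hu : u = s * t := by rw [ht]; field_simp
  have hv : v = s * (t + 1) := by linear_combination hs.symm - hu - s * t * h2
  obtain ⟨r, hr⟩ : ∃ r, r = t ^ 2 + t := ⟨_, rfl⟩
  have hTr : T m r = 0 := by
    rw [hr, T_add, T_sq_arg _ (hq t)]
    exact CharTwo.add_self_eq_zero _
  have hB : 1 + r ≠ 0 := by
    intro h0
    have : r = 1 := by linear_combination h0 - h2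
    rw [this, T_one hm] at hTr
    exact one_ne_zero hTr
  have hE : s ^ 4 * (1 + r + r ^ 2) + s ^ 2 * (1 + r) + 1 = 0 := by
    apply mul_left_cancel₀ hs0
    rw [hr]
    rw [hu, hv] at h
    grind
  obtain ⟨w, hw⟩ : ∃ w, w = (1 + r)⁻¹ := ⟨_, rfl⟩
  have hwB : w * (1 + r) = 1 := by rw [hw]; exact inv_mul_cancel₀ hB
  obtain ⟨y, hy⟩ : ∃ y, y = (1 + r + r ^ 2) * s ^ 2 * w := ⟨_, rfl⟩
  have hyy : y ^ 2 + y = 1 + (w ^ 2 + w) := by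
    have e1 : 1 + r + r ^ 2 = (1 + r) ^ 2 + (1 + r) + 1 := by linear_combination -(1+r) * h2
    have e2 : (1 + r + r ^ 2) * w ^ 2 = 1 + (w ^ 2 + w) := by
      rw [e1]; linear_combination (w * (1 + r) + 1 + w) * hwB
    have e3 : (1 + r + r ^ 2) * w ^ 2 * (s ^ 4 * (1 + r + r ^ 2) + s ^ 2 * (1 + r) + 1) = 0 := by
      rw [hE, mul_zero]
    rw [hy]
    linear_combination e3 - (1 + r + r ^ 2) * w * s ^ 2 * hwB - e2 - (1 + w + w ^ 2) * h2
  have a1 : T m (y ^ 2 + y) = 0 := by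
    rw [T_add, T_sq_arg _ (hq y)]; exact CharTwo.add_self_eq_zero _
  have a2 : T m (w ^ 2 + w) = 0 := by
    rw [T_add, T_sq_arg _ (hq w)]; exact CharTwo.add_self_eq_zero _
  rw [hyy, T_add, a2, T_one hm] at a1
  simp at a1

lemma even_not_inj [Fintype F] [CharP F 2] {m : ℕ} (hm : 0 < m) (he : Even m)
    (hF : Fintype.card F = 2 ^ m) (hq : ∀ x : F, x ^ 2 ^ m = x) (β : F) (hβ : β ≠ 0) :
    ¬ Function.Injective (fun u : F => u ^ 5 + u ^ 3 + β * u) := by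
  classical
  have h2 : (2 : F) = 0 := CharTwo.two_eq_zero
  obtain ⟨b, hb⟩ := exists_sqrt hm β (hq β)
  obtain ⟨s, hs⟩ := exists_sqrt hm b (hq b)
  have h3 : 3 ∣ Fintype.card Fˣ := by
    rw [Fintype.card_units, hF]
    obtain ⟨k, rfl⟩ := he
    have := Nat.sub_dvd_pow_sub_pow 4 1 k
    rw [← two_mul, pow_mul]
    simpa using this
  have : Fact (Nat.Prime 3) := ⟨Nat.prime_three⟩
  obtain ⟨g, hg⟩ := exists_prime_orderOf_dvd_card 3 h3
  have hg3 : (g : F) ^ 3 = 1 := by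
    have := pow_orderOf_eq_one g
    rw [hg] at this
    simpa using congrArg Units.val this
  have hg1 : (g : F) - 1 ≠ 0 := by
    intro h
    have : g = 1 := Units.ext (by simpa using sub_eq_zero.1 h)
    rw [this, orderOf_one] at hg
    omega
  have hw : (g : F) ^ 2 + g + 1 = 0 := by
    apply mul_left_cancel₀ hg1
    linear_combination hg3
  apply collision β s g 1
  · rintro rfl
    apply hβ
    rw [← hb, ← hs]; simp
  · linear_combination hw - h2
  · rw [← hb, ← hs]
    linear_combination (2 * s ^ 4 + s ^ 2) * h2

lemma odd_not_inj [Fintype F] [CharP F 2] {m : ℕ} (hm : Odd m)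
    (hF : Fintype.card F = 2 ^ m) (hq : ∀ x : F, x ^ 2 ^ m = x) (β : F) (hβ : β ≠ 0)
    (hβ1 : β ≠ 1) : ¬ Function.Injective (fun u : F => u ^ 5 + u ^ 3 + β * u) := by
  have h2 : (2 : F) = 0 := CharTwo.two_eq_zero
  have hm3 : 3 ≤ m := by
    by_contra hc
    have : m = 1 := by obtain ⟨k, rfl⟩ := hm; omega
    subst this
    have := hq β
    have h : β * (β - 1) = 0 := by linear_combination this
    rcases mul_eq_zero.1 h with h | h
    · exact hβ h
    · exact hβ1 (sub_eq_zero.1 h)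
  intro hinj
  obtain ⟨b, hb⟩ := exists_sqrt (by omega) β (hq β)
  refine kloosterman hm3 hF (β + b) (T m β + 1) ?_ ?_
  · intro h0
    have h : b * (b - 1) = 0 := by linear_combination h0 + hb - b * h2
    rcases mul_eq_zero.1 h with h | h
    · apply hβ; rw [← hb, h]; simp
    · apply hβ1; rw [← hb, sub_eq_zero.1 h]; simp
  intro x hx
  rcases T_cases x (hq x) with h | hT
  · rw [h, zero_mul]
  have e : T m ((β + b) * x⁻¹) + (T m β + 1) = T m (β * (1 + x⁻¹ + x⁻¹ ^ 2)) + 1 := by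
    have h1 : T m (β * (1 + x⁻¹ + x⁻¹ ^ 2)) = T m β + T m (β * x⁻¹) + T m (b * x⁻¹) := by
      rw [← T_sq_arg (b * x⁻¹) (hq _), ← T_add, ← T_add, mul_pow, hb]
      ring_nf
    rw [h1, add_mul, T_add]; ring
  rw [e]
  rcases T_cases (β * (1 + x⁻¹ + x⁻¹ ^ 2)) (hq _) with h | h
  · exfalso
    have hTr : T m (1 + x) = 0 := by
      rw [T_add, T_one hm, hT]; exact CharTwo.add_self_eq_zero _
    obtain ⟨t, ht⟩ := exists_of_T hm _ (hq _) hTr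
    obtain ⟨y, hy⟩ := exists_of_T hm _ (hq _) h
    have hA : 1 + x + x ^ 2 ≠ 0 := by
      intro h0
      have h1 : T m (1 + (x ^ 2 + x)) = 0 := by
        rw [show 1 + (x ^ 2 + x) = 0 by linear_combination h0]; simp [T]
      rw [T_add, T_add, T_sq_arg x (hq x), T_one hm, CharTwo.add_self_eq_zero] at h1
      simp at h1
    have hy' : (y ^ 2 + y) * x ^ 2 = β * (1 + x + x ^ 2) := by
      rw [hy]; field_simp; ring
    have hy0 : y ≠ 0 := by
      rintro rfl
      have : β * (1 + x + x ^ 2) = 0 := by rw [← hy']; ring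
      exact (mul_ne_zero hβ hA) this
    obtain ⟨s, hs⟩ := exists_sqrt (by omega) (y * x / (1 + x + x ^ 2)) (hq _)
    refine collision β s t (1 + x) ?_ ht ?_ hinj
    · rintro rfl
      have : y * x / (1 + x + x ^ 2) ≠ 0 := div_ne_zero (mul_ne_zero hy0 hx) hA
      apply this; rw [← hs]; simp
    · have hs' : s ^ 2 * (1 + x + x ^ 2) = y * x := by rw [hs]; field_simp
      apply mul_left_cancel₀ hA
      have e1 : 1 + (1 + x) + (1 + x) ^ 2 = 1 + x + x ^ 2 := by linear_combination (1 + x) * h2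
      have e2 : 1 + (1 + x) = x := by linear_combination h2
      rw [e1, e2]
      linear_combination (s ^ 2 * (1 + x + x ^ 2) + y * x + x) * hs' + hy'
        + β * (1 + x + x ^ 2) * h2
  · rw [h, CharTwo.add_self_eq_zero, mul_zero]

end Stmt18

theorem stmt_18 (m : ℕ) (hm : 0 < m)
    (F : Type*) [Field F] [Fintype F] (hF : Fintype.card F = 2 ^ m) :
    (Odd m → Function.Bijective (fun u : F => u ^ 5 + u ^ 3 + u)) ∧
      ∀ γ : F, γ ≠ 0 →
        (Function.Bijective (fun u : F => u ^ 5 + u ^ 3 + γ⁻¹ * u) ↔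
          γ = 1 ∧ Odd m) := by
  have : Fact (Nat.Prime 2) := ⟨Nat.prime_two⟩
  have : CharP F 2 := charP_of_card_eq_prime_pow hF
  have hq : ∀ x : F, x ^ 2 ^ m = x := fun x => by rw [← hF]; exact FiniteField.pow_card x
  have h1 : Odd m → Function.Bijective (fun u : F => u ^ 5 + u ^ 3 + u) := fun ho =>
    Finite.injective_iff_bijective.1 (Stmt18.dickson_inj ho hq)
  refine ⟨h1, fun γ hγ => ⟨fun hb => ?_, ?_⟩⟩
  · rcases Nat.even_or_odd m with he | ho
    · exact absurd hb.1 (Stmt18.even_not_inj hm he hF hq _ (inv_ne_zero hγ))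
    · refine ⟨?_, ho⟩
      by_contra hne
      exact Stmt18.odd_not_inj ho hF hq _ (inv_ne_zero hγ) (by simpa using hne) hb.1
  · rintro ⟨rfl, ho⟩
    simpa using h1 ho
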